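/- arXiv:1203.3619 — 2 statements merged into one kernel-verified Lean document; each statement's English description precedes it below -/
import Mathlib

section
/- In Stage One of SHALE, the projected delivery never exceeds the demand: for every iteration t ≥ 0 and every contract j, d_j(α^t) = Σ_{i∈Γ(j)} s_i g_{ij}(α^t_j − β^t_i) ≤ d_j. -/
open Finset Filter Topology

noncomputable section

variable {I J : Type*} [Fintype I] [Fintype J]

open Classical in
/-- Γ(j): the impressions eligible for contract `j`. -/
def GammaD (adj : I → J → Prop) (j : J) : Finset I :=
  Finset.univ.filter (fun i => adj i j)

open Classical in
/-- Γ(i): the contracts eligible for impression `i`. -/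
def GammaS (adj : I → J → Prop) (i : I) : Finset J :=
  Finset.univ.filter (fun j => adj i j)

/-- Total eligible supply `S_j = ∑_{i ∈ Γ(j)} s_i`. -/
def Stot (adj : I → J → Prop) (s : I → ℝ) (j : J) : ℝ :=
  ∑ i ∈ GammaD adj j, s i

/-- Target `θ_{ij} = d_j / S_j` (independent of `i`). -/
def theta (adj : I → J → Prop) (s : I → ℝ) (d : J → ℝ) (j : J) : ℝ :=
  d j / Stot adj s j

/-- `g_{ij}(z) = max {0, θ_{ij} (1 + z / V_j)}` (independent of `i`). -/
def gfun (adj : I → J → Prop) (s : I → ℝ) (d V : J → ℝ) (j : J) (z : ℝ) : ℝ :=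
  max 0 ((theta adj s d j) * (1 + z / V j))

/-- `b` is a valid supply dual `β_i` for demand duals `α`: `b ≥ 0` and either `b = 0` with
`∑_{j ∈ Γ(i)} g_{ij}(α_j) ≤ 1`, or `∑_{j ∈ Γ(i)} g_{ij}(α_j − b) = 1`. -/
def BetaSpec (adj : I → J → Prop) (s : I → ℝ) (d V : J → ℝ)
    (α : J → ℝ) (i : I) (b : ℝ) : Prop :=
  0 ≤ b ∧ ((b = 0 ∧ ∑ j ∈ GammaS adj i, gfun adj s d V j (α j) ≤ 1) ∨
    ∑ j ∈ GammaS adj i, gfun adj s d V j (α j - b) = 1)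

/-- Stage One of SHALE: `α⁰ = 0`; `β^t_i` is a valid supply dual for `α^t`; and
`α^{t+1}_j = min (p_j) a_j` where `a_j` solves `∑_{i ∈ Γ(j)} s_i g_{ij}(a_j − β^t_i) = d_j`. -/
def StageOne (adj : I → J → Prop) (s : I → ℝ) (d p V : J → ℝ)
    (α : ℕ → J → ℝ) (β : ℕ → I → ℝ) : Prop :=
  (∀ j, α 0 j = 0) ∧
  (∀ t i, BetaSpec adj s d V (α t) i (β t i)) ∧
  (∀ t j, ∃ a : ℝ,
    (∑ i ∈ GammaD adj j, s i * gfun adj s d V j (a - β t i) = d j) ∧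
    α (t + 1) j = min (p j) a)

/-- Projected delivery `d_j(α) = ∑_{i ∈ Γ(j)} s_i g_{ij}(α_j − β_i)`. -/
def Dproj (adj : I → J → Prop) (s : I → ℝ) (d V : J → ℝ)
    (α : J → ℝ) (β : I → ℝ) (j : J) : ℝ :=
  ∑ i ∈ GammaD adj j, s i * gfun adj s d V j (α j - β i)

/-- The objective of the allocation problem. -/
def Fobj (adj : I → J → Prop) (s : I → ℝ) (d p V : J → ℝ)
    (x : I → J → ℝ) (u : J → ℝ) : ℝ :=
  (1 / 2) * ∑ j, ∑ i ∈ GammaD adj j,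
      s i * (V j / theta adj s d j) * (x i j - theta adj s d j) ^ 2
    + ∑ j, p j * u j

/-- Feasibility for the allocation problem. -/
def Feasible (adj : I → J → Prop) (s : I → ℝ) (d : J → ℝ)
    (x : I → J → ℝ) (u : J → ℝ) : Prop :=
  (∀ j, d j ≤ ∑ i ∈ GammaD adj j, s i * x i j + u j) ∧
  (∀ i, ∑ j ∈ GammaS adj i, x i j ≤ 1) ∧
  (∀ i j, adj i j → 0 ≤ x i j) ∧
  (∀ j, 0 ≤ u j)

/-- The KKT conditions for duals `(α, β)`. -/
def KKT (adj : I → J → Prop) (s : I → ℝ) (d p V : J → ℝ)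
    (α : J → ℝ) (β : I → ℝ) : Prop :=
  (∀ j, 0 ≤ α j ∧ α j ≤ p j) ∧
  (∀ i, 0 ≤ β i ∧ (∑ j ∈ GammaS adj i, gfun adj s d V j (α j - β i) ≤ 1) ∧
    (0 < β i → ∑ j ∈ GammaS adj i, gfun adj s d V j (α j - β i) = 1)) ∧
  (∀ j, (∑ i ∈ GammaD adj j, s i * gfun adj s d V j (α j - β i) ≤ d j) ∧
    (α j < p j → ∑ i ∈ GammaD adj j, s i * gfun adj s d V j (α j - β i) = d j))


theorem theta_pos_aux (adj : I → J → Prop) (s : I → ℝ) (d : J → ℝ)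
    (hd : ∀ j, 0 < d j) (hS : ∀ j, 0 < Stot adj s j) (j : J) : 0 < theta adj s d j :=
  div_pos (hd j) (hS j)

theorem gfun_mono_aux (adj : I → J → Prop) (s : I → ℝ) (d V : J → ℝ)
    (hd : ∀ j, 0 < d j) (hV : ∀ j, 0 < V j) (hS : ∀ j, 0 < Stot adj s j) (j : J)
    {x y : ℝ} (h : x ≤ y) : gfun adj s d V j x ≤ gfun adj s d V j y := by
  have h1 := theta_pos_aux adj s d hd hS j
  have h2 : x / V j ≤ y / V j := div_le_div_of_nonneg_right h (hV j).le
  exact max_le_max le_rfl (mul_le_mul_of_nonneg_left (by linarith) h1.le)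

theorem gfun_strict_aux (adj : I → J → Prop) (s : I → ℝ) (d V : J → ℝ)
    (hd : ∀ j, 0 < d j) (hV : ∀ j, 0 < V j) (hS : ∀ j, 0 < Stot adj s j) (j : J)
    {x y : ℝ} (h : x < y) (h0 : 0 < gfun adj s d V j x) :
    gfun adj s d V j x < gfun adj s d V j y := by
  have h1 := theta_pos_aux adj s d hd hS j
  have h2 : x / V j < y / V j := div_lt_div_of_pos_right h (hV j)
  have h3 : theta adj s d j * (1 + x / V j) < theta adj s d j * (1 + y / V j) :=
    mul_lt_mul_of_pos_left (by linarith) h1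
  unfold gfun at *
  have h4 : 0 < theta adj s d j * (1 + x / V j) := by
    rcases lt_max_iff.1 h0 with h | h
    · exact absurd h (lt_irrefl _)
    · exact h
  rw [max_eq_right h4.le, max_eq_right (h4.trans h3).le]
  exact h3

/-- Valid supply duals are monotone in the demand duals. -/
theorem beta_mono_aux (adj : I → J → Prop) (s : I → ℝ) (d V : J → ℝ)
    (hd : ∀ j, 0 < d j) (hV : ∀ j, 0 < V j) (hS : ∀ j, 0 < Stot adj s j)
    {a a' : J → ℝ} (haa : ∀ j, a j ≤ a' j) (i : I) {b b' : ℝ}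
    (hb : BetaSpec adj s d V a i b) (hb' : BetaSpec adj s d V a' i b') : b ≤ b' := by
  by_contra! hlt
  have hle : ∑ j ∈ GammaS adj i, gfun adj s d V j (a' j - b') ≤ 1 := by
    rcases hb'.2 with ⟨h0, h⟩ | h
    · simpa [h0] using h
    · exact h.le
  rcases hb.2 with ⟨h0, -⟩ | h
  · have := hb'.1
    linarith
  · obtain ⟨k, hk, hkp⟩ : ∃ k ∈ GammaS adj i, 0 < gfun adj s d V k (a k - b) := by
      by_contra! hn
      have := Finset.sum_nonpos hn
      linarith
    have : ∑ j ∈ GammaS adj i, gfun adj s d V j (a j - b)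
        < ∑ j ∈ GammaS adj i, gfun adj s d V j (a' j - b') := by
      apply Finset.sum_lt_sum
      · intro j _
        exact gfun_mono_aux adj s d V hd hV hS j (by linarith [haa j])
      · exact ⟨k, hk, gfun_strict_aux adj s d V hd hV hS k (by linarith [haa k]) hkp⟩
    linarith

theorem shale_projected_delivery_le_demand
    (adj : I → J → Prop) (s : I → ℝ) (d p V : J → ℝ)
    (hs : ∀ i, 0 < s i) (hd : ∀ j, 0 < d j) (hp : ∀ j, 0 < p j) (hV : ∀ j, 0 < V j)
    (hS : ∀ j, 0 < Stot adj s j)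
    (α : ℕ → J → ℝ) (β : ℕ → I → ℝ) (hstage : StageOne adj s d p V α β) :
    ∀ t j, Dproj adj s d V (α t) (β t) j ≤ d j := by
  obtain ⟨h0, hβ, hα⟩ := hstage
  have key : ∀ t, (∀ j, α t j ≤ p j) ∧ ∀ j, Dproj adj s d V (α t) (β t) j ≤ d j := by
    intro t
    induction t with
    | zero =>
      refine ⟨fun j => by rw [h0]; exact (hp j).le, fun j => ?_⟩
      have hθ := theta_pos_aux adj s d hd hS j
      have hg : gfun adj s d V j 0 = theta adj s d j := by
        simp [gfun, hθ.le]
      calc Dproj adj s d V (α 0) (β 0) j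
          ≤ ∑ i ∈ GammaD adj j, s i * theta adj s d j := by
            apply Finset.sum_le_sum
            intro i _
            apply mul_le_mul_of_nonneg_left _ (hs i).le
            rw [← hg]
            exact gfun_mono_aux adj s d V hd hV hS j (by rw [h0]; linarith [(hβ 0 i).1])
        _ = Stot adj s j * theta adj s d j := by rw [← Finset.sum_mul]; rfl
        _ = d j := mul_div_cancel₀ _ (hS j).ne'
    | succ t ih =>
      obtain ⟨hle, hD⟩ := ih
      have hmono : ∀ j, α t j ≤ α (t + 1) j := by
        intro j
        obtain ⟨a, ha, he⟩ := hα t j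
        rw [he]
        refine le_min (hle j) ?_
        by_contra! hlt
        obtain ⟨k, hk, hkp⟩ : ∃ k ∈ GammaD adj j, 0 < s k * gfun adj s d V j (a - β t k) := by
          by_contra! hn
          have := Finset.sum_nonpos hn
          linarith [hd j]
        have : ∑ i ∈ GammaD adj j, s i * gfun adj s d V j (a - β t i)
            < Dproj adj s d V (α t) (β t) j := by
          apply Finset.sum_lt_sum
          · intro i _
            exact mul_le_mul_of_nonneg_left
              (gfun_mono_aux adj s d V hd hV hS j (by linarith)) (hs i).le
          · exact ⟨k, hk, mul_lt_mul_of_pos_left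
              (gfun_strict_aux adj s d V hd hV hS j (by linarith)
                ((mul_pos_iff_of_pos_left (hs k)).1 hkp)) (hs k)⟩
        linarith [hD j]
      refine ⟨fun j => ?_, fun j => ?_⟩
      · obtain ⟨a, -, he⟩ := hα t j
        rw [he]
        exact min_le_left _ _
      · obtain ⟨a, ha, he⟩ := hα t j
        rw [← ha]
        apply Finset.sum_le_sum
        intro i _
        apply mul_le_mul_of_nonneg_left _ (hs i).le
        apply gfun_mono_aux adj s d V hd hV hS j
        have h1 := beta_mono_aux adj s d V hd hV hS hmono i (hβ t i) (hβ (t + 1) i)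
        have h2 : α (t + 1) j ≤ a := by rw [he]; exact min_le_right _ _
        linarith
  exact fun t => (key t).2

end
end

section
/- Convergence of Stage One to an optimal solution: the pointwise limits α_j = lim_{t→∞} α^t_j and β_i = lim_{t→∞} β^t_i exist; the limit pair satisfies 0 ≤ α_j ≤ p_j for all j, β_i ≥ 0 and Σ_{j∈Γ(i)} g_{ij}(α_j − β_i) ≤ 1 for all i with equality whenever β_i > 0, and Σ_{i∈Γ(j)} s_i·g_{ij}(α_j − β_i) ≤ d_j for all j with equality whenever α_j < p_j; consequently, setting x_{ij} = g_{ij}(α_j − β_i) and u_j = d_j − Σ_{i∈Γ(j)} s_i·x_{ij}, the pair (x,u) is feasible and minimizes F over all feasible pairs. -/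
open Finset Filter Topology

noncomputable section

variable {I J : Type*} [Fintype I] [Fintype J]

section helpers

variable (adj : I → J → Prop) (s : I → ℝ) (d p V : J → ℝ)

lemma theta_pos' (hd : ∀ j, 0 < d j) (hS : ∀ j, 0 < Stot adj s j) (j : J) :
    0 < theta adj s d j := div_pos (hd j) (hS j)

lemma gfun_nonneg' (j : J) (z : ℝ) : 0 ≤ gfun adj s d V j z := le_max_left _ _

lemma gfun_mono' (hV : ∀ j, 0 < V j) (hd : ∀ j, 0 < d j) (hS : ∀ j, 0 < Stot adj s j)
    (j : J) {z w : ℝ} (h : z ≤ w) : gfun adj s d V j z ≤ gfun adj s d V j w := by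
  have h1 : z / V j ≤ w / V j := div_le_div_of_nonneg_right h (hV j).le
  have h2 := mul_le_mul_of_nonneg_left h1 (theta_pos' adj s d hd hS j).le
  unfold gfun
  exact max_le_max le_rfl (by linarith)

lemma gfun_strict' (hV : ∀ j, 0 < V j) (hd : ∀ j, 0 < d j) (hS : ∀ j, 0 < Stot adj s j)
    (j : J) {z w : ℝ} (h : z < w) (hz : 0 < gfun adj s d V j z) :
    gfun adj s d V j z < gfun adj s d V j w := by
  have h1 : z / V j < w / V j := div_lt_div_of_pos_right h (hV j)
  have h2 := mul_lt_mul_of_pos_left h1 (theta_pos' adj s d hd hS j)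
  unfold gfun at *
  have h3 : 0 < theta adj s d j * (1 + z / V j) := by
    rcases lt_max_iff.1 hz with h | h
    · exact absurd h (lt_irrefl _)
    · exact h
  rw [max_eq_right h3.le]
  exact lt_max_of_lt_right (by linarith)

lemma gfun_cont' (j : J) : Continuous (gfun adj s d V j) := by
  unfold gfun
  fun_prop

lemma beta_sum_le {α : J → ℝ} {i : I} {b : ℝ} (h : BetaSpec adj s d V α i b) :
    ∑ j ∈ GammaS adj i, gfun adj s d V j (α j - b) ≤ 1 := by
  rcases h with ⟨_, ⟨rfl, h⟩ | h⟩
  · simpa using h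
  · exact h.le

lemma beta_sum_eq {α : J → ℝ} {i : I} {b : ℝ} (h : BetaSpec adj s d V α i b) (hb : 0 < b) :
    ∑ j ∈ GammaS adj i, gfun adj s d V j (α j - b) = 1 := by
  rcases h with ⟨_, ⟨rfl, h⟩ | h⟩
  · exact absurd hb (lt_irrefl _)
  · exact h

lemma beta_mono (hV : ∀ j, 0 < V j) (hd : ∀ j, 0 < d j) (hS : ∀ j, 0 < Stot adj s j)
    {α α' : J → ℝ} {i : I} {b b' : ℝ} (h : BetaSpec adj s d V α i b)
    (h' : BetaSpec adj s d V α' i b') (hα : ∀ j, α j ≤ α' j) : b ≤ b' := by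
  by_contra! hlt
  have e1 := beta_sum_eq adj s d V h (lt_of_le_of_lt h'.1 hlt)
  have e2 := beta_sum_le adj s d V h'
  obtain ⟨j, hj, hpos⟩ : ∃ j ∈ GammaS adj i, 0 < gfun adj s d V j (α j - b) :=
    Finset.exists_lt_of_sum_lt (f := fun _ => (0 : ℝ)) (by rw [e1]; simp)
  have : ∑ j ∈ GammaS adj i, gfun adj s d V j (α j - b)
      < ∑ j ∈ GammaS adj i, gfun adj s d V j (α' j - b') :=
    Finset.sum_lt_sum
      (fun k _ => gfun_mono' adj s d V hV hd hS k (by linarith [hα k]))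
      ⟨j, hj, gfun_strict' adj s d V hV hd hS j (by linarith [hα j]) hpos⟩
  linarith

lemma a_mono (hs : ∀ i, 0 < s i) (hV : ∀ j, 0 < V j) (hd : ∀ j, 0 < d j)
    (hS : ∀ j, 0 < Stot adj s j)
    {β β' : I → ℝ} {j : J} {a a' : ℝ}
    (h : ∑ i ∈ GammaD adj j, s i * gfun adj s d V j (a - β i) = d j)
    (h' : ∑ i ∈ GammaD adj j, s i * gfun adj s d V j (a' - β' i) = d j)
    (hβ : ∀ i, β i ≤ β' i) : a ≤ a' := by
  by_contra! hlt
  obtain ⟨i, hi, hpos⟩ : ∃ i ∈ GammaD adj j, 0 < s i * gfun adj s d V j (a' - β' i) :=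
    Finset.exists_lt_of_sum_lt (f := fun _ => (0 : ℝ)) (by rw [h']; simpa using hd j)
  have : ∑ i ∈ GammaD adj j, s i * gfun adj s d V j (a' - β' i)
      < ∑ i ∈ GammaD adj j, s i * gfun adj s d V j (a - β i) :=
    Finset.sum_lt_sum
      (fun k _ => mul_le_mul_of_nonneg_left
        (gfun_mono' adj s d V hV hd hS j (by linarith [hβ k])) (hs k).le)
      ⟨i, hi, mul_lt_mul_of_pos_left
        (gfun_strict' adj s d V hV hd hS j (by linarith [hβ i])
          (pos_of_mul_pos_right hpos (hs i).le)) (hs i)⟩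
  linarith

lemma a_zero (hd : ∀ j, 0 < d j) (hS : ∀ j, 0 < Stot adj s j) (j : J) :
    ∑ i ∈ GammaD adj j, s i * gfun adj s d V j (0 - 0) = d j := by
  have h : gfun adj s d V j (0 - 0) = theta adj s d j := by
    unfold gfun
    simp [(theta_pos' adj s d hd hS j).le]
  rw [h, ← Finset.sum_mul]
  unfold theta
  have := (hS j).ne'
  change Stot adj s j * _ = _
  field_simp

lemma alpha_mono (hs : ∀ i, 0 < s i) (hd : ∀ j, 0 < d j) (hp : ∀ j, 0 < p j)
    (hV : ∀ j, 0 < V j) (hS : ∀ j, 0 < Stot adj s j)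
    {α : ℕ → J → ℝ} {β : ℕ → I → ℝ} (hstage : StageOne adj s d p V α β) (t : ℕ) :
    ∀ j, α t j ≤ α (t + 1) j := by
  obtain ⟨h0, hb, ha⟩ := hstage
  induction t with
  | zero =>
    intro j
    obtain ⟨a, ha1, ha2⟩ := ha 0 j
    rw [h0, ha2]
    exact le_min (hp j).le (a_mono adj s d V hs hV hd hS (β := fun _ => 0)
      (a_zero adj s d V hd hS j) ha1 (fun i => (hb 0 i).1))
  | succ t ih =>
    intro j
    obtain ⟨a, ha1, ha2⟩ := ha t j
    obtain ⟨a', ha1', ha2'⟩ := ha (t + 1) j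
    rw [ha2, ha2']
    exact min_le_min le_rfl (a_mono adj s d V hs hV hd hS ha1 ha1'
      (fun i => beta_mono adj s d V hV hd hS (hb t i) (hb (t + 1) i) ih))

lemma beta_bound (hp : ∀ j, 0 < p j) (hV : ∀ j, 0 < V j) (hd : ∀ j, 0 < d j)
    (hS : ∀ j, 0 < Stot adj s j)
    {α : J → ℝ} {i : I} {b : ℝ} (h : BetaSpec adj s d V α i b) (hα : ∀ j, α j ≤ p j) :
    b ≤ ∑ j, (p j + V j) := by
  by_contra! hlt
  have hnn : 0 ≤ ∑ j, (p j + V j) := Finset.sum_nonneg fun j _ => by linarith [hp j, hV j]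
  have e1 := beta_sum_eq adj s d V h (lt_of_le_of_lt hnn hlt)
  obtain ⟨j, hj, hpos⟩ : ∃ j ∈ GammaS adj i, 0 < gfun adj s d V j (α j - b) :=
    Finset.exists_lt_of_sum_lt (f := fun _ => (0 : ℝ)) (by rw [e1]; simp)
  have hle : p j + V j ≤ ∑ j, (p j + V j) :=
    Finset.single_le_sum (f := fun j => p j + V j)
      (fun j _ => by linarith [hp j, hV j]) (Finset.mem_univ j)
  have h1 : (α j - b) / V j ≤ -1 := by
    rw [div_le_iff₀ (hV j)]
    linarith [hα j]
  have h2 : gfun adj s d V j (α j - b) = 0 := by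
    unfold gfun
    exact max_eq_left (mul_nonpos_of_nonneg_of_nonpos (theta_pos' adj s d hd hS j).le
      (by linarith))
  linarith

lemma kkt_feasible {α : J → ℝ} {β : I → ℝ} (h : KKT adj s d p V α β) :
    Feasible adj s d (fun i j => gfun adj s d V j (α j - β i))
        (fun j => d j - ∑ i ∈ GammaD adj j, s i * gfun adj s d V j (α j - β i)) := by
  obtain ⟨_, h2, h3⟩ := h
  refine ⟨fun j => ?_, fun i => (h2 i).2.1, fun i j _ => gfun_nonneg' adj s d V j _,
    fun j => ?_⟩
  · dsimp only
    linarith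
  · have := (h3 j).1
    dsimp only
    linarith

lemma pointwise_ineq (hs : ∀ i, 0 < s i) (hd : ∀ j, 0 < d j)
    (hV : ∀ j, 0 < V j) (hS : ∀ j, 0 < Stot adj s j) (i : I) (j : J) (z y : ℝ) (hy : 0 ≤ y) :
    (1 / 2) * (s i * (V j / theta adj s d j) * (gfun adj s d V j z - theta adj s d j) ^ 2)
      + s i * (z * (y - gfun adj s d V j z)) ≤
    (1 / 2) * (s i * (V j / theta adj s d j) * (y - theta adj s d j) ^ 2) := by
  have hθ := theta_pos' adj s d hd hS j
  have hVj := hV j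
  have key : z * (y - gfun adj s d V j z) ≤ (V j / theta adj s d j) *
      ((gfun adj s d V j z - theta adj s d j) * (y - gfun adj s d V j z)) := by
    unfold gfun
    rcases le_total 0 (theta adj s d j * (1 + z / V j)) with h | h
    · rw [max_eq_right h]
      apply le_of_eq
      field_simp
      ring
    · rw [max_eq_left h]
      have h1 : 1 + z / V j ≤ 0 := nonpos_of_mul_nonpos_right h hθ
      have h2 : z / V j ≤ -1 := by linarith
      rw [div_le_iff₀ hVj] at h2
      have h3 : V j / theta adj s d j * ((0 - theta adj s d j) * (y - 0)) = -V j * y := by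
        field_simp
        ring
      rw [h3]
      nlinarith
  have hc : 0 < V j / theta adj s d j := div_pos hVj hθ
  generalize V j / theta adj s d j = c at *
  generalize gfun adj s d V j z = x at *
  generalize theta adj s d j = θ at *
  have h4 := mul_le_mul_of_nonneg_left key (hs i).le
  have h5 : 0 ≤ s i * c * (y - x) ^ 2 := by have := hs i; positivity
  nlinarith

lemma kkt_optimal (hs : ∀ i, 0 < s i) (hd : ∀ j, 0 < d j)
    (hV : ∀ j, 0 < V j) (hS : ∀ j, 0 < Stot adj s j)
    {α : J → ℝ} {β : I → ℝ} (h : KKT adj s d p V α β) (y : I → J → ℝ) (v : J → ℝ)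
    (hf : Feasible adj s d y v) :
    Fobj adj s d p V (fun i j => gfun adj s d V j (α j - β i))
          (fun j => d j - ∑ i ∈ GammaD adj j, s i * gfun adj s d V j (α j - β i))
          ≤ Fobj adj s d p V y v := by
  obtain ⟨h1, h2, h3⟩ := h
  obtain ⟨f1, f2, f3, f4⟩ := hf
  unfold Fobj
  rw [Finset.mul_sum, Finset.mul_sum]
  simp_rw [Finset.mul_sum (GammaD adj _)]
  have A : ∑ j, ∑ i ∈ GammaD adj j,
      ((1 / 2) * (s i * (V j / theta adj s d j) *
          (gfun adj s d V j (α j - β i) - theta adj s d j) ^ 2)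
        + s i * ((α j - β i) * (y i j - gfun adj s d V j (α j - β i)))) ≤
      ∑ j, ∑ i ∈ GammaD adj j,
        (1 / 2) * (s i * (V j / theta adj s d j) * (y i j - theta adj s d j) ^ 2) := by
    refine Finset.sum_le_sum fun j _ => Finset.sum_le_sum fun i hi => ?_
    exact pointwise_ineq adj s d V hs hd hV hS i j _ _ (f3 i j (by simpa [GammaD] using hi))
  simp_rw [Finset.sum_add_distrib] at A
  have B : ∑ j, ∑ i ∈ GammaD adj j,
        s i * ((α j - β i) * (y i j - gfun adj s d V j (α j - β i)))
      = ∑ j, α j * (∑ i ∈ GammaD adj j, s i * y i j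
            - ∑ i ∈ GammaD adj j, s i * gfun adj s d V j (α j - β i))
        - ∑ i, s i * (β i * (∑ j ∈ GammaS adj i, y i j
            - ∑ j ∈ GammaS adj i, gfun adj s d V j (α j - β i))) := by
    have e : ∑ i, s i * (β i * (∑ j ∈ GammaS adj i, y i j
            - ∑ j ∈ GammaS adj i, gfun adj s d V j (α j - β i)))
        = ∑ j, ∑ i ∈ GammaD adj j,
          s i * (β i * (y i j - gfun adj s d V j (α j - β i))) := by
      simp_rw [← Finset.sum_sub_distrib, Finset.mul_sum]
      exact Finset.sum_comm' (by simp [GammaS, GammaD])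
    rw [e, ← Finset.sum_sub_distrib]
    refine Finset.sum_congr rfl fun j _ => ?_
    rw [← Finset.sum_sub_distrib, Finset.mul_sum, ← Finset.sum_sub_distrib]
    exact Finset.sum_congr rfl fun i _ => by ring
  have C : ∑ i, s i * (β i * (∑ j ∈ GammaS adj i, y i j
            - ∑ j ∈ GammaS adj i, gfun adj s d V j (α j - β i))) ≤ 0 := by
    refine Finset.sum_nonpos fun i _ => ?_
    obtain ⟨hb, _, he⟩ := h2 i
    rcases hb.eq_or_lt with hb | hb
    · rw [← hb]
      simp
    · rw [he hb]
      exact mul_nonpos_of_nonneg_of_nonpos (hs i).le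
        (mul_nonpos_of_nonneg_of_nonpos hb.le (by linarith [f2 i]))
  have D : ∑ j, p j * (d j - ∑ i ∈ GammaD adj j, s i * gfun adj s d V j (α j - β i)) ≤
      ∑ j, α j * (∑ i ∈ GammaD adj j, s i * y i j
            - ∑ i ∈ GammaD adj j, s i * gfun adj s d V j (α j - β i)) + ∑ j, p j * v j := by
    rw [← Finset.sum_add_distrib]
    refine Finset.sum_le_sum fun j _ => ?_
    have k1 := f1 j
    have k2 := f4 j
    obtain ⟨k3, k4⟩ := h1 j
    obtain ⟨_, k5⟩ := h3 j
    generalize ∑ i ∈ GammaD adj j, s i * gfun adj s d V j (α j - β i) = X at *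
    generalize ∑ i ∈ GammaD adj j, s i * y i j = Y at *
    rcases k4.eq_or_lt with k | k
    · rw [← k]
      nlinarith
    · rw [k5 k]
      nlinarith
  linarith

end helpers

theorem shale_stage_one_converges_to_optimal
    (adj : I → J → Prop) (s : I → ℝ) (d p V : J → ℝ)
    (hs : ∀ i, 0 < s i) (hd : ∀ j, 0 < d j) (hp : ∀ j, 0 < p j) (hV : ∀ j, 0 < V j)
    (hS : ∀ j, 0 < Stot adj s j)
    (α : ℕ → J → ℝ) (β : ℕ → I → ℝ) (hstage : StageOne adj s d p V α β) :
    ∃ (αl : J → ℝ) (βl : I → ℝ),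
      (∀ j, Filter.Tendsto (fun t => α t j) Filter.atTop (𝓝 (αl j))) ∧
      (∀ i, Filter.Tendsto (fun t => β t i) Filter.atTop (𝓝 (βl i))) ∧
      KKT adj s d p V αl βl ∧
      Feasible adj s d (fun i j => gfun adj s d V j (αl j - βl i))
        (fun j => d j - ∑ i ∈ GammaD adj j, s i * gfun adj s d V j (αl j - βl i)) ∧
      ∀ y v, Feasible adj s d y v →
        Fobj adj s d p V (fun i j => gfun adj s d V j (αl j - βl i))
          (fun j => d j - ∑ i ∈ GammaD adj j, s i * gfun adj s d V j (αl j - βl i))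
          ≤ Fobj adj s d p V y v := by
  have hαm := alpha_mono adj s d p V hs hd hp hV hS hstage
  obtain ⟨h0, hb, ha⟩ := hstage
  have hβm : ∀ t i, β t i ≤ β (t + 1) i := fun t i =>
    beta_mono adj s d V hV hd hS (hb t i) (hb (t + 1) i) (hαm t)
  have hαp : ∀ t j, α t j ≤ p j := by
    intro t j
    cases t with
    | zero => rw [h0]; exact (hp j).le
    | succ t =>
      obtain ⟨a, _, ha2⟩ := ha t j
      rw [ha2]
      exact min_le_left _ _
  have hα0 : ∀ t j, 0 ≤ α t j := fun t j => by
    have := monotone_nat_of_le_succ (fun t => hαm t j) (Nat.zero_le t)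
    simpa [h0] using this
  have la : ∀ j, ∃ l, Tendsto (fun t => α t j) atTop (𝓝 l) := fun j =>
    ⟨_, tendsto_atTop_ciSup (monotone_nat_of_le_succ fun t => hαm t j)
      ⟨p j, by rintro _ ⟨t, rfl⟩; exact hαp t j⟩⟩
  have lb : ∀ i, ∃ l, Tendsto (fun t => β t i) atTop (𝓝 l) := fun i =>
    ⟨_, tendsto_atTop_ciSup (monotone_nat_of_le_succ fun t => hβm t i)
      ⟨∑ j, (p j + V j), by
        rintro _ ⟨t, rfl⟩
        exact beta_bound adj s d p V hp hV hd hS (hb t i) (hαp t)⟩⟩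
  choose αl hαl using la
  choose βl hβl using lb
  have hkkt : KKT adj s d p V αl βl := by
    refine ⟨fun j => ⟨ge_of_tendsto' (hαl j) fun t => hα0 t j,
      le_of_tendsto' (hαl j) fun t => hαp t j⟩, fun i => ?_, fun j => ?_⟩
    · have T : Tendsto (fun t => ∑ j ∈ GammaS adj i, gfun adj s d V j (α t j - β t i)) atTop
          (𝓝 (∑ j ∈ GammaS adj i, gfun adj s d V j (αl j - βl i))) :=
        tendsto_finsetSum _ fun j _ =>
          ((gfun_cont' adj s d V j).tendsto _).comp ((hαl j).sub (hβl i))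
      refine ⟨ge_of_tendsto' (hβl i) fun t => (hb t i).1,
        le_of_tendsto' T fun t => beta_sum_le adj s d V (hb t i), fun hpos => ?_⟩
      refine tendsto_nhds_unique T (tendsto_const_nhds.congr' ?_)
      filter_upwards [(hβl i).eventually (lt_mem_nhds hpos)] with t ht
      exact (beta_sum_eq adj s d V (hb t i) ht).symm
    · have hαl1 := (tendsto_add_atTop_iff_nat 1).2 (hαl j)
      have T : Tendsto (fun t => ∑ i ∈ GammaD adj j,
            s i * gfun adj s d V j (α (t + 1) j - β t i)) atTop
          (𝓝 (∑ i ∈ GammaD adj j, s i * gfun adj s d V j (αl j - βl i))) :=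
        tendsto_finsetSum _ fun i _ =>
          (((gfun_cont' adj s d V j).tendsto _).comp (hαl1.sub (hβl i))).const_mul _
      refine ⟨le_of_tendsto' T fun t => ?_, fun hlt => ?_⟩
      · obtain ⟨a, ha1, ha2⟩ := ha t j
        rw [ha2]
        refine le_trans (Finset.sum_le_sum fun i _ => ?_) ha1.le
        exact mul_le_mul_of_nonneg_left (gfun_mono' adj s d V hV hd hS j
          (sub_le_sub_right (min_le_right _ _) _)) (hs i).le
      · refine tendsto_nhds_unique T (tendsto_const_nhds.congr' ?_)
        filter_upwards [hαl1.eventually (gt_mem_nhds hlt)] with t ht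
        obtain ⟨a, ha1, ha2⟩ := ha t j
        have : α (t + 1) j = a := by
          rw [ha2] at ht ⊢
          rcases min_lt_iff.1 ht with h | h
          · exact absurd h (lt_irrefl _)
          · exact min_eq_right h.le
        rw [this, ha1]
  exact ⟨αl, βl, hαl, hβl, hkkt, kkt_feasible adj s d p V hkkt,
    fun y v hf => kkt_optimal adj s d p V hs hd hV hS hkkt y v hf⟩

end
end
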